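/- arXiv:1310.3526 — 2 statements merged into one kernel-verified Lean document; each statement's English description precedes it below -/
import Mathlib

section
/- (Pósa's rotation-extension lemma) Let G = (V,E) be a finite graph and let t ≥ 1 be an integer such that |N(X) \ X| ≥ 2|X| − 1 for every vertex set X ⊆ V with |X| ≤ t. Then for every vertex v ∈ V there exists a path of length 3t − 2 in G having v as an endpoint. -/
/-- `N_G(X)`: the set of vertices adjacent in `G` to at least one vertex of `X`. -/
def setNeighborSet {V : Type*} (G : SimpleGraph V) (X : Set V) : Set V :=
  {u | ∃ v ∈ X, G.Adj v u}

/-!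
Take a longest path `u, x, …, v` ending at `v` and let `S` be the set of first vertices of the paths
obtained from it by rotations, with `v` fixed. Every neighbour of `S` lies on the path, and since a
rotation changes the path neighbours only of `S` and of path neighbours of `S`, the set `N(S) \ S`
consists of path neighbours of `S`. As `u` has only one path neighbour, `|N(S) \ S| ≤ 2|S| - 1`.

If the path is too short, then `|S| < t`, but this bound is no contradiction yet: it only makes `S`
tight. By submodularity of `|N(X) \ X|`, the intersection of two tight sets with a small union is
tight, while counting path neighbours shows that every tight subset of `S` contains `u`. Hence two
longest paths with the same vertices apart from the first also have the same first vertex: otherwise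
the intersection of their sets of ends would be tight but would miss `u`.

Now remove `u` and let `B` be the set of ends of the rotations of the remaining path `x, …, v`. A
vertex of `B` has no neighbour outside the path, since such a neighbour could replace `u`. So
`N(S ∪ B) \ (S ∪ B)` again consists of path neighbours of `S ∪ B`, of which there are at most
`2|S ∪ B| - 1`; but `x` is one of them and lies in `B`, so the expansion of `S ∪ B` fails.
-/

namespace Posa

open SimpleGraph SimpleGraph.Walk

variable {V : Type*} {G : SimpleGraph V} {t : ℕ} {u v x y : V} {w : G.Walk u v}

/-- The external vertex boundary `N(X) \ X` of a vertex set. -/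
def outerBoundary (G : SimpleGraph V) (X : Set V) : Set V :=
  setNeighborSet G X \ X

/-- The expansion condition `|N(X) \ X| ≥ 2|X| - 1` for all `X` with `|X| ≤ t`, with the `1` moved
to the other side to avoid subtraction. Cardinalities are taken in `ℕ∞`, so that an infinite
boundary counts as large. -/
def IsExpanding (G : SimpleGraph V) (t : ℕ) : Prop :=
  ∀ ⦃X : Set V⦄, X.encard ≤ t → 2 * X.encard ≤ (outerBoundary G X).encard + 1

lemma IsExpanding.of_ncard [Finite V]
    (h : ∀ X : Set V, X.ncard ≤ t → 2 * X.ncard - 1 ≤ (setNeighborSet G X \ X).ncard) :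
    IsExpanding G t := by
  intro X hX
  rw [← X.toFinite.cast_ncard_eq] at hX ⊢
  rw [← (outerBoundary G X).toFinite.cast_ncard_eq]
  norm_cast at hX ⊢
  exact Nat.sub_le_iff_le_add.1 (h X hX)

lemma setNeighborSet_insert (G : SimpleGraph V) (x : V) (X : Set V) :
    setNeighborSet G (insert x X) = G.neighborSet x ∪ setNeighborSet G X := by
  ext y
  simp [setNeighborSet]

lemma encard_setNeighborSet_le {d : ℕ∞} {X : Set V} (hX : X.Finite)
    (hd : ∀ x ∈ X, (G.neighborSet x).encard ≤ d) :
    (setNeighborSet G X).encard ≤ d * X.encard := by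
  induction X, hX using Set.Finite.induction_on with
  | empty => simp [setNeighborSet]
  | @insert x X hx _ ih =>
    rw [setNeighborSet_insert, Set.encard_insert_of_notMem hx, mul_add_one, add_comm]
    exact (Set.encard_union_le _ _).trans <| add_le_add (hd x (Set.mem_insert _ _)) <|
      ih fun y hy => hd y (Set.mem_insert_of_mem _ hy)

lemma encard_outerBoundary_union_add_inter_le (G : SimpleGraph V) (S T : Set V) :
    (outerBoundary G (S ∪ T)).encard + (outerBoundary G (S ∩ T)).encard ≤
      (outerBoundary G S).encard + (outerBoundary G T).encard := by
  have hunion : outerBoundary G (S ∪ T) ∪ outerBoundary G (S ∩ T) ⊆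
      outerBoundary G S ∪ outerBoundary G T := by
    rintro y (⟨⟨a, ha | ha, hy⟩, h⟩ | ⟨⟨a, ha, hy⟩, h⟩)
    · exact Or.inl ⟨⟨a, ha, hy⟩, fun hS => h (Or.inl hS)⟩
    · exact Or.inr ⟨⟨a, ha, hy⟩, fun hT => h (Or.inr hT)⟩
    · by_cases hS : y ∈ S
      · exact Or.inr ⟨⟨a, ha.2, hy⟩, fun hT => h ⟨hS, hT⟩⟩
      · exact Or.inl ⟨⟨a, ha.1, hy⟩, hS⟩
  have hinter : outerBoundary G (S ∪ T) ∩ outerBoundary G (S ∩ T) ⊆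
      outerBoundary G S ∩ outerBoundary G T := by
    rintro y ⟨⟨_, h⟩, ⟨⟨a, ha, hy⟩, _⟩⟩
    exact ⟨⟨⟨a, ha.1, hy⟩, fun hS => h (Or.inl hS)⟩, ⟨a, ha.2, hy⟩, fun hT => h (Or.inr hT)⟩
  rw [← Set.encard_union_add_encard_inter (outerBoundary G (S ∪ T)),
    ← Set.encard_union_add_encard_inter (outerBoundary G S)]
  exact add_le_add (Set.encard_le_encard hunion) (Set.encard_le_encard hinter)

/-- A set violating `|N(X) \ X| ≥ 2|X|`. In an expanding graph, a small one attains the bound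
`2|X| - 1` with equality. -/
def IsTight (G : SimpleGraph V) (X : Set V) : Prop :=
  (outerBoundary G X).encard + 1 ≤ 2 * X.encard

lemma IsExpanding.exists_adj (hexp : IsExpanding G t) (ht : 1 ≤ t) (x : V) : ∃ y, G.Adj x y := by
  by_contra! h
  have hempty : outerBoundary G {x} = ∅ := by simp [outerBoundary, setNeighborSet, h]
  simpa [hempty] using hexp (X := {x}) (by simpa using ht)

lemma IsExpanding.isTight_inter (hexp : IsExpanding G t) {S T : Set V}
    (hST : (S ∪ T).encard ≤ t) (hS : IsTight G S) (hT : IsTight G T) : IsTight G (S ∩ T) := by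
  have hbound := hexp hST
  have hsubmod := encard_outerBoundary_union_add_inter_le G S T
  have hcard := Set.encard_union_add_encard_inter S T
  -- These two bounds exclude the value `⊤` in the case split of `enat_to_nat`.
  have hinter := le_add_self.trans hsubmod
  have hTU := Set.encard_le_encard (Set.subset_union_right (s := S) (t := T))
  unfold IsTight at *
  generalize (outerBoundary G (S ∪ T)).encard = n₁ at *
  generalize (outerBoundary G (S ∩ T)).encard = n₂ at *
  generalize (outerBoundary G S).encard = n₃ at *
  generalize (outerBoundary G T).encard = n₄ at *
  generalize (S ∪ T).encard = m₁ at *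
  generalize (S ∩ T).encard = m₂ at *
  generalize S.encard = m₃ at *
  generalize T.encard = m₄ at *
  enat_to_nat
  omega

lemma IsExpanding.encard_lt_of_subset (hexp : IsExpanding G t) {P X : Set V}
    (hP : P.encard + 1 < 3 * t) (hX : X ⊆ P) (hN : outerBoundary G X ⊆ P) : X.encard < t := by
  by_contra! hcard
  obtain ⟨Y, hYX, hY⟩ := Set.exists_subset_encard_eq hcard
  have hsub : outerBoundary G Y ∪ Y ⊆ P := by
    rintro y (⟨⟨a, ha, hay⟩, -⟩ | hy)
    · by_cases hyX : y ∈ X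
      · exact hX hyX
      · exact hN ⟨⟨a, hYX ha, hay⟩, hyX⟩
    · exact hX (hYX hy)
  have hunion : (outerBoundary G Y ∪ Y).encard = (outerBoundary G Y).encard + Y.encard :=
    Set.encard_union_eq Set.disjoint_sdiff_left
  have hle := Set.encard_le_encard hsub
  have hbound := hexp hY.le
  rw [hunion, hY] at hle
  rw [hY] at hbound
  generalize (outerBoundary G Y).encard = b at *
  generalize P.encard = c at *
  enat_to_nat
  omega

/-! ### Path neighbours -/

/-- The vertices consecutive on the walk `w` to some vertex of `X`, that is, the neighbourhood of
`X` in the graph formed by the edges of `w`. -/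
def walkNeighborSet (w : G.Walk u v) (X : Set V) : Set V :=
  setNeighborSet w.toSubgraph.spanningCoe X

lemma walkNeighborSet_mono {a b : V} {p : G.Walk a b} {X Y : Set V}
    (hle : p.toSubgraph ≤ w.toSubgraph) (hXY : X ⊆ Y) :
    walkNeighborSet p X ⊆ walkNeighborSet w Y := by
  rintro y ⟨a, ha, hay⟩
  exact ⟨a, hXY ha, hle.2 hay⟩

lemma encard_support_le (w : G.Walk u v) : {x | x ∈ w.support}.encard ≤ w.length + 1 := by
  classical
  rw [← List.coe_toFinset, Set.encard_coe_eq_coe_finsetCard]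
  exact_mod_cast w.length_support ▸ w.support.toFinset_card_le

lemma walkNeighborSet_subset_support (w : G.Walk u v) (X : Set V) :
    walkNeighborSet w X ⊆ {x | x ∈ w.support} :=
  fun _ ⟨_, _, h⟩ => mem_support_of_adj_toSubgraph h.symm

lemma encard_neighborSet_toSubgraph_start_le_one (hw : w.IsPath) :
    (w.toSubgraph.neighborSet u).encard ≤ 1 :=
  (Set.encard_le_encard fun _ h => (hw.snd_of_toSubgraph_adj h).symm).trans_eq
    (Set.encard_singleton w.snd)

lemma encard_neighborSet_toSubgraph_le_two (hw : w.IsPath) (x : V) :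
    (w.toSubgraph.neighborSet x).encard ≤ 2 := by
  by_cases hx : x ∈ w.support
  · obtain ⟨q, r, rfl⟩ := w.mem_support_iff_exists_append.1 hx
    have hq := encard_neighborSet_toSubgraph_start_le_one hw.of_append_left.reverse
    have hr := encard_neighborSet_toSubgraph_start_le_one hw.of_append_right
    rw [toSubgraph_reverse] at hq
    rw [toSubgraph_append, Subgraph.neighborSet_sup, ← one_add_one_eq_two]
    exact (Set.encard_union_le _ _).trans (add_le_add hq hr)
  · have hempty : w.toSubgraph.neighborSet x = ∅ :=
      Set.eq_empty_of_forall_notMem fun y hy => hx (mem_support_of_adj_toSubgraph hy)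
    simp [hempty]

lemma encard_walkNeighborSet_add_one_le (hw : w.IsPath) {X : Set V} (hu : u ∈ X) :
    (walkNeighborSet w X).encard + 1 ≤ 2 * X.encard := by
  obtain hX | hX := X.finite_or_infinite
  · have hle := encard_setNeighborSet_le (G := w.toSubgraph.spanningCoe) (hX.sdiff (t := {u}))
      fun x _ => encard_neighborSet_toSubgraph_le_two hw x
    rw [walkNeighborSet, ← Set.insert_sdiff_self_of_mem hu, setNeighborSet_insert,
      Set.encard_insert_of_notMem (by simp), mul_add_one]
    calc _ ≤ 1 + 2 * (X \ {u}).encard + 1 := by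
          gcongr
          exact (Set.encard_union_le _ _).trans <|
            add_le_add (encard_neighborSet_toSubgraph_start_le_one hw) hle
      _ = _ := by ring
  · simp [hX.encard_eq]

lemma IsExpanding.walkNeighborSet_subset_outerBoundary (hexp : IsExpanding G t) (hw : w.IsPath)
    {X : Set V} (hX : X.encard ≤ t) (hu : u ∈ X)
    (hsub : outerBoundary G X ⊆ walkNeighborSet w X) :
    walkNeighborSet w X ⊆ outerBoundary G X := by
  have hfin : (walkNeighborSet w X).Finite :=
    w.support.finite_toSet.subset (walkNeighborSet_subset_support w X)
  have hle : (walkNeighborSet w X).encard ≤ (outerBoundary G X).encard :=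
    (ENat.add_le_add_iff_right ENat.one_ne_top).1
      ((encard_walkNeighborSet_add_one_le hw hu).trans (hexp hX))
  exact (hfin.eq_of_subset_of_encard_le' hsub hle).ge

/-! ### Rotations -/

/-- `IsRotation w w'`: the walk `w'` arises from `w` by Pósa rotations fixing the end `v`. One
rotation turns `a ⋯ b c ⋯ v` into `b ⋯ a c ⋯ v` along an edge `ac`. -/
inductive IsRotation (w : G.Walk u v) : ∀ {x : V}, G.Walk x v → Prop
  | refl : IsRotation w w
  | step {a b c : V} {q : G.Walk a b} {hbc : G.Adj b c} {r : G.Walk c v} (hac : G.Adj a c)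
      (h : IsRotation w (q.append (cons hbc r))) : IsRotation w (q.reverse.append (cons hac r))

/-- The set of free ends of all walks obtained from `w` by rotations. -/
def rotationEnds (w : G.Walk u v) : Set V :=
  {x | ∃ w' : G.Walk x v, IsRotation w w'}

lemma start_mem_rotationEnds (w : G.Walk u v) : u ∈ rotationEnds w :=
  ⟨w, .refl⟩

lemma IsRotation.support_perm {w' : G.Walk x v} (h : IsRotation w w') :
    w'.support.Perm w.support := by
  induction h with
  | refl => exact .refl _
  | step hac h ih =>
    simp only [support_append, support_cons, List.tail_cons, support_reverse] at ih ⊢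
    exact ((List.reverse_perm _).append_right _).trans ih

lemma IsRotation.length_eq {w' : G.Walk x v} (h : IsRotation w w') : w'.length = w.length := by
  simpa using h.support_perm.length_eq

lemma IsRotation.isPath {w' : G.Walk x v} (h : IsRotation w w') (hw : w.IsPath) : w'.IsPath := by
  rw [isPath_def] at hw ⊢
  exact h.support_perm.nodup_iff.2 hw

lemma rotationEnds_subset_support (w : G.Walk u v) : rotationEnds w ⊆ {x | x ∈ w.support} := by
  rintro x ⟨w', h⟩
  exact h.support_perm.mem_iff.1 w'.start_mem_support

lemma exists_eq_append_cons (w : G.Walk u v) (hx : x ∈ w.support) (hux : u ≠ x) :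
    ∃ (b : V) (q : G.Walk u b) (h : G.Adj b x) (r : G.Walk x v), w = q.append (cons h r) := by
  obtain ⟨q, r, rfl⟩ := w.mem_support_iff_exists_append.1 hx
  induction q using Walk.concatRec with
  | Hnil => exact absurd rfl hux
  | Hconcat q h => exact ⟨_, q, h, r, concat_append ..⟩

lemma IsRotation.exists_mem_rotationEnds_adj {w' : G.Walk x v} (h : IsRotation w w')
    (hxy : G.Adj x y) (hy : y ∈ w.support) :
    ∃ c ∈ rotationEnds w, w'.toSubgraph.Adj c y := by
  obtain ⟨c, q, hcy, r, rfl⟩ :=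
    exists_eq_append_cons w' (h.support_perm.mem_iff.2 hy) hxy.ne
  refine ⟨c, ⟨_, h.step hxy⟩, ?_⟩
  simp [toSubgraph_append, Walk.toSubgraph]

lemma IsRotation.toSubgraph_adj_of_notMem {a : V} {w' : G.Walk a v} (h : IsRotation w w')
    (hyS : y ∉ rotationEnds w) (hyN : y ∉ walkNeighborSet w (rotationEnds w))
    (hxy : w'.toSubgraph.Adj x y) : w.toSubgraph.Adj x y := by
  induction h generalizing x with
  | refl => exact hxy
  | @step a b c q hbc r hac h ih =>
    simp only [toSubgraph_append, toSubgraph_reverse, Walk.toSubgraph, Subgraph.sup_adj,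
      subgraphOfAdj_adj, Sym2.eq_iff] at hxy ih
    rcases hxy with hq | (⟨rfl, rfl⟩ | ⟨rfl, rfl⟩) | hr
    · exact ih (.inl hq)
    · exact absurd ⟨b, ⟨_, h.step hac⟩, ih (by simp)⟩ hyN
    · exact absurd ⟨_, h⟩ hyS
    · exact ih (.inr (.inr hr))

lemma mem_walkNeighborSet_rotationEnds (hx : x ∈ rotationEnds w) (hxy : G.Adj x y)
    (hy : y ∈ w.support) (hyS : y ∉ rotationEnds w) :
    y ∈ walkNeighborSet w (rotationEnds w) := by
  by_contra hyN
  obtain ⟨w', h⟩ := hx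
  obtain ⟨c, hc, hcy⟩ := h.exists_mem_rotationEnds_adj hxy hy
  exact hyN ⟨c, hc, h.toSubgraph_adj_of_notMem hyS hyN hcy⟩

/-! ### Longest paths -/

/-- `w` is a path of maximal length among all paths ending at `v`. -/
def IsLongestPath (w : G.Walk u v) : Prop :=
  w.IsPath ∧ ∀ ⦃x : V⦄ (p : G.Walk x v), p.IsPath → p.length ≤ w.length

lemma exists_isLongestPath {n : ℕ}
    (hn : ∀ (u : V) (p : G.Walk u v), p.IsPath → p.length ≤ n) :
    ∃ (u : V) (w : G.Walk u v), IsLongestPath w := by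
  obtain ⟨_, ⟨u, w, hw, rfl⟩, hmax⟩ := BddAbove.exists_isGreatest_of_nonempty
    (S := {m | ∃ (u : V) (p : G.Walk u v), p.IsPath ∧ p.length = m})
    ⟨n, by rintro _ ⟨u, p, hp, rfl⟩; exact hn u p hp⟩ ⟨0, v, .nil, .nil, rfl⟩
  exact ⟨u, w, hw, fun x p hp => hmax ⟨x, p, hp, rfl⟩⟩

lemma IsLongestPath.of_length_eq (hw : IsLongestPath w) {p : G.Walk x v} (hp : p.IsPath)
    (hlen : p.length = w.length) : IsLongestPath p :=
  ⟨hp, fun _ q hq => hlen ▸ hw.2 q hq⟩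

lemma IsLongestPath.mem_support_of_adj (hw : IsLongestPath w) (hux : G.Adj u x) :
    x ∈ w.support := by
  by_contra hx
  simpa using hw.2 _ (hw.1.cons (h := hux.symm) hx)

lemma IsLongestPath.mem_support_of_mem_rotationEnds (hw : IsLongestPath w)
    (hx : x ∈ rotationEnds w) (hxy : G.Adj x y) : y ∈ w.support := by
  obtain ⟨w', h⟩ := hx
  exact h.support_perm.mem_iff.1
    ((hw.of_length_eq (h.isPath hw.1) h.length_eq).mem_support_of_adj hxy)

lemma IsLongestPath.outerBoundary_rotationEnds_subset (hw : IsLongestPath w) :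
    outerBoundary G (rotationEnds w) ⊆ walkNeighborSet w (rotationEnds w) := by
  rintro y ⟨⟨x, hx, hxy⟩, hy⟩
  exact mem_walkNeighborSet_rotationEnds hx hxy (hw.mem_support_of_mem_rotationEnds hx hxy) hy

lemma IsExpanding.encard_lt_of_subset_support (hexp : IsExpanding G t)
    (hlen : w.length + 2 < 3 * t) {X : Set V} (hX : X ⊆ {x | x ∈ w.support})
    (hN : ∀ x ∈ X, ∀ y, G.Adj x y → y ∈ w.support) : X.encard < t := by
  refine hexp.encard_lt_of_subset ?_ hX fun y ⟨⟨x, hx, hxy⟩, _⟩ => hN x hx y hxy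
  calc _ ≤ (w.length + 1 + 1 : ℕ∞) := by gcongr; exact encard_support_le w
    _ < 3 * t := by exact_mod_cast hlen

namespace IsLongestPath

lemma encard_rotationEnds_lt (hw : IsLongestPath w) (hexp : IsExpanding G t)
    (hlen : w.length + 2 < 3 * t) : (rotationEnds w).encard < t :=
  hexp.encard_lt_of_subset_support hlen (rotationEnds_subset_support w)
    fun _ hx _ hxy => hw.mem_support_of_mem_rotationEnds hx hxy

lemma isTight_rotationEnds (hw : IsLongestPath w) : IsTight G (rotationEnds w) :=
  (add_le_add_left (Set.encard_le_encard hw.outerBoundary_rotationEnds_subset) 1).trans <|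
    encard_walkNeighborSet_add_one_le hw.1 (start_mem_rotationEnds w)

lemma not_adj_start (hw : IsLongestPath w) (hexp : IsExpanding G t)
    (hlen : w.length + 2 < 3 * t) (hx : x ∈ rotationEnds w) : ¬ G.Adj u x := by
  intro hux
  obtain ⟨c, hc, hcx⟩ :=
    IsRotation.refl.exists_mem_rotationEnds_adj hux (rotationEnds_subset_support w hx)
  exact (hexp.walkNeighborSet_subset_outerBoundary hw.1 (hw.encard_rotationEnds_lt hexp hlen).le
    (start_mem_rotationEnds w) hw.outerBoundary_rotationEnds_subset ⟨c, hc, hcx⟩).2 hx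

lemma start_mem_of_isTight (hw : IsLongestPath w) (hexp : IsExpanding G t)
    (hlen : w.length + 2 < 3 * t) {Z : Set V} (hZ : Z ⊆ rotationEnds w) (hZt : IsTight G Z) :
    u ∈ Z := by
  by_contra hu
  set S := rotationEnds w
  have hsub : outerBoundary G S ⊆ outerBoundary G Z ∪ walkNeighborSet w (S \ Z) := by
    intro y hy
    obtain ⟨a, ha, hay⟩ := hw.outerBoundary_rotationEnds_subset hy
    by_cases haZ : a ∈ Z
    · exact .inl ⟨⟨a, haZ, hay.adj_sub⟩, fun hyZ => hy.2 (hZ hyZ)⟩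
    · exact .inr ⟨a, ⟨ha, haZ⟩, hay⟩
  have hle := (Set.encard_le_encard hsub).trans (Set.encard_union_le _ _)
  have hN := encard_walkNeighborSet_add_one_le hw.1 (X := S \ Z) ⟨start_mem_rotationEnds w, hu⟩
  have hlt := hw.encard_rotationEnds_lt hexp hlen
  have hbound := hexp hlt.le
  have hZS := Set.encard_le_encard hZ
  have hcard := Set.encard_sdiff_add_encard_of_subset hZ
  unfold IsTight at hZt
  generalize (outerBoundary G S).encard = n₁ at *
  generalize (outerBoundary G Z).encard = n₂ at *
  generalize (walkNeighborSet w _).encard = n₃ at *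
  generalize (S \ Z).encard = m₁ at *
  generalize S.encard = m₂ at *
  generalize Z.encard = m₃ at *
  enat_to_nat
  omega

section ExchangeStart

variable {a b : V} {hux : G.Adj u x} {p : G.Walk x v} {hab : G.Adj a b} {q : G.Walk b v}

/-- Together the two paths may have one vertex too many for `encard_lt_of_subset_support`, but `a`
is not adjacent to any rotation end of its path, so leaving out `a` confines all neighbours to one
path. -/
lemma encard_union_rotationEnds_le (hp : IsLongestPath (cons hux p))
    (hq : IsLongestPath (cons hab q)) (hqp : q.support ⊆ p.support) (hexp : IsExpanding G t)
    (hlen : (cons hux p).length + 2 < 3 * t) :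
    (rotationEnds (cons hux p) ∪ rotationEnds (cons hab q)).encard ≤ t := by
  set S := rotationEnds (cons hux p)
  set T := rotationEnds (cons hab q)
  have hlen' : (cons hab q).length + 2 < 3 * t :=
    (Nat.add_le_add_right (hp.2 _ hq.1) 2).trans_lt hlen
  have hmem {z : V} (hz : z ∈ (cons hab q).support) (hza : z ≠ a) : z ∈ (cons hux p).support :=
    List.mem_cons_of_mem _ <| hqp <| (List.mem_cons.1 hz).resolve_left hza
  have hlt : (S ∪ T \ {a}).encard < t := by
    refine hexp.encard_lt_of_subset_support hlen
      (Set.union_subset (rotationEnds_subset_support _) fun z hz =>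
        hmem (rotationEnds_subset_support _ hz.1) hz.2) ?_
    rintro z (hz | hz) y hzy
    · exact hp.mem_support_of_mem_rotationEnds hz hzy
    · refine hmem (hq.mem_support_of_mem_rotationEnds hz.1 hzy) ?_
      rintro rfl
      exact hq.not_adj_start hexp hlen' hz.1 hzy.symm
  have hsub : S ∪ T ⊆ insert a (S ∪ T \ {a}) := by grind
  exact (Set.encard_le_encard hsub).trans <|
    (Set.encard_insert_le _ _).trans (Order.add_one_le_of_lt hlt)

lemma start_eq_of_support_subset (hp : IsLongestPath (cons hux p))
    (hq : IsLongestPath (cons hab q)) (hqp : q.support ⊆ p.support) (hexp : IsExpanding G t)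
    (hlen : (cons hux p).length + 2 < 3 * t) : u = a := by
  have hle := encard_union_rotationEnds_le hp hq hqp hexp hlen
  have htight := hexp.isTight_inter hle hp.isTight_rotationEnds hq.isTight_rotationEnds
  have hu := (hp.start_mem_of_isTight hexp hlen Set.inter_subset_left htight).2
  have hup : u ∉ p.support := ((cons_isPath_iff hux p).1 hp.1).2
  exact (List.mem_cons.1 (rotationEnds_subset_support _ hu)).resolve_right fun h => hup (hqp h)

lemma mem_support_of_mem_rotationEnds_tail (hp : IsLongestPath (cons hux p))
    (hexp : IsExpanding G t) (hlen : (cons hux p).length + 2 < 3 * t)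
    (hb : b ∈ rotationEnds p) (hby : G.Adj b y) : y ∈ (cons hux p).support := by
  obtain ⟨q, hq⟩ := hb
  by_contra hy
  have hyq : y ∉ q.support := fun h => hy (List.mem_cons_of_mem _ (hq.support_perm.subset h))
  have hpath : (cons hby.symm q).IsPath := (hq.isPath hp.1.of_cons).cons hyq
  have hlongest := hp.of_length_eq hpath (by simp [hq.length_eq])
  have huy := hp.start_eq_of_support_subset hlongest hq.support_perm.subset hexp hlen
  exact hy (huy ▸ start_mem_support _)

end ExchangeStart

lemma outerBoundary_union_rotationEnds_tail_subset {hux : G.Adj u x} {p : G.Walk x v}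
    (hp : IsLongestPath (cons hux p))
    (hN : ∀ z ∈ rotationEnds p, ∀ y, G.Adj z y → y ∈ (cons hux p).support) :
    outerBoundary G (rotationEnds (cons hux p) ∪ rotationEnds p) ⊆
      walkNeighborSet (cons hux p) (rotationEnds (cons hux p) ∪ rotationEnds p) := by
  have huS : u ∈ rotationEnds (cons hux p) ∪ rotationEnds p := .inl (start_mem_rotationEnds _)
  rintro y ⟨⟨z, hz | hz, hzy⟩, hy⟩
  · exact walkNeighborSet_mono le_rfl Set.subset_union_left
      (hp.outerBoundary_rotationEnds_subset ⟨⟨z, hz, hzy⟩, fun h => hy (.inl h)⟩)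
  · have hyu : y ≠ u := ne_of_mem_of_not_mem huS hy |>.symm
    have hyp : y ∈ p.support := (List.mem_cons.1 (hN z hz y hzy)).resolve_left hyu
    exact walkNeighborSet_mono (le_sup_right : _ ≤ G.subgraphOfAdj hux ⊔ p.toSubgraph)
      Set.subset_union_right (mem_walkNeighborSet_rotationEnds hz hzy hyp fun h => hy (.inr h))

lemma le_length_add_two (hw : IsLongestPath w) (hexp : IsExpanding G t) (ht : 1 ≤ t) :
    3 * t ≤ w.length + 2 := by
  by_contra! hlen
  cases w with
  | nil =>
    obtain ⟨y, hy⟩ := hexp.exists_adj ht u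
    exact hy.ne' (by simpa using hw.mem_support_of_adj hy)
  | @cons _ x _ hux p =>
    set S := rotationEnds (cons hux p)
    set B := rotationEnds p
    have huS : u ∈ S ∪ B := .inl (start_mem_rotationEnds _)
    have hS : ∀ z ∈ S, ∀ y, G.Adj z y → y ∈ (cons hux p).support :=
      fun _ hz _ => hw.mem_support_of_mem_rotationEnds hz
    have hB : ∀ z ∈ B, ∀ y, G.Adj z y → y ∈ (cons hux p).support :=
      fun _ hz _ => hw.mem_support_of_mem_rotationEnds_tail hexp hlen hz
    have hlt : (S ∪ B).encard < t := hexp.encard_lt_of_subset_support hlen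
      (Set.union_subset (rotationEnds_subset_support _) fun z hz =>
        List.mem_cons_of_mem _ (rotationEnds_subset_support _ hz))
      fun z hz => hz.elim (hS z) (hB z)
    have hx : x ∈ outerBoundary G (S ∪ B) :=
      hexp.walkNeighborSet_subset_outerBoundary hw.1 hlt.le huS
        (hw.outerBoundary_union_rotationEnds_tail_subset hB) ⟨u, huS, .inl rfl⟩
    exact hx.2 (.inr (start_mem_rotationEnds p))

end IsLongestPath

end Posa

theorem posa_rotation_extension_general {V : Type*} (G : SimpleGraph V) (t : ℕ) (ht : 1 ≤ t)
    (hexp : Posa.IsExpanding G t) (v : V) :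
    ∃ (u : V) (w : G.Walk v u), w.IsPath ∧ w.length + 2 = 3 * t := by
  suffices ∃ (u : V) (w : G.Walk u v), w.IsPath ∧ 3 * t ≤ w.length + 2 by
    obtain ⟨u, w, hw, hlen⟩ := this
    refine ⟨_, w.reverse.take (3 * t - 2), hw.reverse.take _, ?_⟩
    rw [SimpleGraph.Walk.take_length, SimpleGraph.Walk.length_reverse]
    omega
  by_contra! hshort
  obtain ⟨u, w, hw⟩ := Posa.exists_isLongestPath (v := v) (n := 3 * t) fun u w hw => by
    have := hshort u w hw
    omega
  exact (hshort u w hw.1).not_ge (hw.le_length_add_two hexp ht)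

/-- Pósa's rotation-extension lemma: if `|N(X) \ X| ≥ 2|X| - 1` for every vertex set `X`
with `|X| ≤ t`, then every vertex is an endpoint of a path of length `3t - 2`. -/
theorem posa_rotation_extension {V : Type*} [Fintype V] (G : SimpleGraph V)
    (t : ℕ) (ht : 1 ≤ t)
    (hexp : ∀ X : Set V, X.ncard ≤ t →
      2 * X.ncard - 1 ≤ ((setNeighborSet G X) \ X).ncard) :
    ∀ v : V, ∃ (u : V) (w : G.Walk v u), w.IsPath ∧ w.length = 3 * t - 2 := by
  intro v
  obtain ⟨u, w, hw, hlen⟩ := posa_rotation_extension_general G t ht (.of_ncard hexp) v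
  exact ⟨u, w, hw, by omega⟩
end

section
/- Let ε ∈ (0,1), n a positive integer, p ∈ (0,1], and let G' be a bipartite graph with parts V₀, V₁ of size n each, maximum degree at most (1+ε)·n·p, and more than (1+ε)·n²·p/2 edges. For i = 0,1, let B_i be the set of vertices in V_i whose degree in G' is at least (1+ε/2)·n·p/2. Then there exists a vertex v₀ ∈ V₀ ∪ V₁ with |N_{G'}(v₀) ∩ (B₀ ∪ B₁)| ≥ ε·n·p/4. -/
open Finset

/-!
Count the pairs `(v, u)` with `v` adjacent to `u` and `u` of degree at least `t`. The vertices `u`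
of smaller degree contribute at most `t * |V|` to the degree sum `2 * |E|`, so there are at least
`2 * |E| - t * |V|` such pairs, and some `v` lies in at least the average number
`2 * |E| / |V| - t` of them. Here `2 * |E| / |V| > (1 + ε) * n * p / 2` and
`t = (1 + ε / 2) * n * p / 2`, two numbers that differ by exactly `ε * n * p / 4`.
-/

theorem sum_card_neighborFinset_inter_comm {V : Type*} [DecidableEq V] (G : SimpleGraph V)
    [G.LocallyFinite] (S T : Finset V) :
    ∑ v ∈ S, #(G.neighborFinset v ∩ T) = ∑ u ∈ T, #(G.neighborFinset u ∩ S) := by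
  classical
  have above (v : V) : T.bipartiteAbove G.Adj v = G.neighborFinset v ∩ T := by
    ext u
    simp [and_comm]
  have below (u : V) : S.bipartiteBelow G.Adj u = G.neighborFinset u ∩ S := by
    ext v
    simp [and_comm, G.adj_comm]
  simpa only [above, below] using
    sum_card_bipartiteAbove_eq_sum_card_bipartiteBelow (s := S) (t := T) G.Adj

theorem sum_le_card_nsmul_add_sum_filter_le {ι M : Type*} [AddCommMonoid M] [LinearOrder M]
    [IsOrderedAddMonoid M] (s : Finset ι) (f : ι → M) {t : M} (ht : 0 ≤ t) :
    ∑ i ∈ s, f i ≤ #s • t + ∑ i ∈ s with t ≤ f i, f i := by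
  have sum_small_le : ∑ i ∈ s with ¬ t ≤ f i, f i ≤ #s • t :=
    calc ∑ i ∈ s with ¬ t ≤ f i, f i
        ≤ #{i ∈ s | ¬ t ≤ f i} • t :=
          sum_le_card_nsmul _ _ _ fun i hi => (not_le.mp (mem_filter.mp hi).2).le
      _ ≤ #s • t := nsmul_le_nsmul_left ht (card_filter_le _ _)
  rw [← sum_filter_not_add_sum_filter s (t ≤ f ·)]
  gcongr

theorem exists_vertex_many_large_degree_neighbors_general {V R : Type*} [Fintype V]
    [DecidableEq V] [Nonempty V] [CommRing R] [LinearOrder R] [IsStrictOrderedRing R]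
    (G : SimpleGraph V) [DecidableRel G.Adj] {d t : R} (ht : 0 ≤ t)
    (hd : Fintype.card V * d ≤ 2 * #G.edgeFinset) :
    ∃ v₀ : V, d - t ≤ #(G.neighborFinset v₀ ∩ univ.filter fun v => t ≤ (G.degree v : R)) := by
  set B : Finset V := univ.filter fun v => t ≤ (G.degree v : R)
  have degree_sum : ∑ v, (G.degree v : R) = 2 * #G.edgeFinset := by
    exact_mod_cast G.sum_degrees_eq_twice_card_edges
  have pair_count : ∑ v, (#(G.neighborFinset v ∩ B) : R) = ∑ u ∈ B, (G.degree u : R) := by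
    have := sum_card_neighborFinset_inter_comm G univ B
    simp only [inter_univ, G.card_neighborFinset_eq_degree] at this
    exact_mod_cast this
  have degree_sum_le : ∑ v, (G.degree v : R) ≤ Fintype.card V * t + ∑ u ∈ B, (G.degree u : R) := by
    simpa only [card_univ, nsmul_eq_mul] using
      sum_le_card_nsmul_add_sum_filter_le univ (fun v => (G.degree v : R)) ht
  have sum_le : ∑ _v : V, (d - t) ≤ ∑ v, (#(G.neighborFinset v ∩ B) : R) :=
    calc ∑ _v : V, (d - t) = Fintype.card V * d - Fintype.card V * t := by
          rw [sum_const, card_univ, nsmul_eq_mul, mul_sub]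
      _ ≤ ∑ v, (#(G.neighborFinset v ∩ B) : R) := by linarith
  obtain ⟨v₀, -, hv₀⟩ := exists_le_of_sum_le univ_nonempty sum_le
  exact ⟨v₀, hv₀⟩

/-- If a bipartite graph `G'` with parts of size `n`, maximum degree at most `(1+ε)np`
and more than `(1+ε)n²p/2` edges is given, then some vertex `v₀` has at least `εnp/4`
neighbors among the vertices of degree at least `(1+ε/2)np/2` (i.e. in `B₀ ∪ B₁`). -/
theorem exists_vertex_many_large_degree_neighbors
    (ε : ℝ) (hε : ε ∈ Set.Ioo (0 : ℝ) 1) (n : ℕ) (hn : 0 < n)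
    (p : ℝ) (hp0 : 0 < p) (hp1 : p ≤ 1)
    (G' : SimpleGraph (Fin n ⊕ Fin n)) [DecidableRel G'.Adj]
    (hbip : G' ≤ completeBipartiteGraph (Fin n) (Fin n))
    (hmax : ∀ v : Fin n ⊕ Fin n, (G'.degree v : ℝ) ≤ (1 + ε) * n * p)
    (he : (1 + ε) * n ^ 2 * p / 2 < (G'.edgeFinset.card : ℝ)) :
    ∃ v₀ : Fin n ⊕ Fin n,
      ε * n * p / 4 ≤
        ((G'.neighborFinset v₀ ∩ univ.filter (fun v : Fin n ⊕ Fin n =>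
          (1 + ε / 2) * n * p / 2 ≤ (G'.degree v : ℝ))).card : ℝ) := by
  obtain ⟨hε_pos, -⟩ := hε
  have : Nonempty (Fin n) := Fin.pos_iff_nonempty.mp hn
  obtain ⟨v₀, hv₀⟩ := exists_vertex_many_large_degree_neighbors_general G'
    (d := (1 + ε) * n * p / 2) (t := (1 + ε / 2) * n * p / 2) (by positivity)
    (by rw [Fintype.card_sum, Fintype.card_fin]; push_cast; linarith)
  exact ⟨v₀, by linarith⟩
end
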